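/- arXiv:2306.08432 — 3 statements merged into one kernel-verified Lean document; each statement's English description precedes it below -/
import Mathlib

section
/- Let X and Y be random vectors in ℝ^n with laws having finite first moments, and let D ⊂ ℝ^n be a compact set with P(X ∉ D) ≤ ε, P(Y ∉ D) ≤ δ, and P(X ∈ D) > 0, P(Y ∈ D) > 0. Let X_D and Y_D denote X and Y conditioned on the events {X ∈ D} and {Y ∈ D}, respectively. Then W₁(X_D, Y_D) ≤ W₁(X, Y) + (ε + δ)·max_{x,y ∈ D} ‖x − y‖₂. -/
open MeasureTheory ProbabilityTheory

noncomputable section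

/-- The 1-Wasserstein distance between two measures on a normed space: the infimum of
`E‖X − Y‖` over all couplings. -/
def W1 {E : Type*} [NormedAddCommGroup E] [MeasurableSpace E] (μ ν : Measure E) : ℝ :=
  sInf {c : ℝ | ∃ π : Measure (E × E), IsProbabilityMeasure π ∧
    π.map Prod.fst = μ ∧ π.map Prod.snd = ν ∧ c = ∫ q, ‖q.1 - q.2‖ ∂π}

/-!
Given any coupling `π` of `μ` and `ν`, keep only its part `ρ` on `D ×ˢ D`. Conditioning on `D`
multiplies `μ.restrict D` by a factor at least `1`, so the marginals of `ρ` are dominated by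
`μ[|D]` and `ν[|D]`. Two finite measures of equal mass are always coupled by a multiple of their
product, so `ρ` can be completed to a coupling of `μ[|D]` and `ν[|D]`. The completion has mass
`π (D ×ˢ D)ᶜ ≤ μ Dᶜ + ν Dᶜ` and lives on `D ×ˢ D`, where the cost is at most `diam D`.
-/

theorem restrict_le_cond {Ω : Type*} [MeasurableSpace Ω] (μ : Measure Ω)
    [IsZeroOrProbabilityMeasure μ] (s : Set Ω) : μ.restrict s ≤ μ[|s] :=
  calc μ.restrict s = (1 : ENNReal) • μ.restrict s := (one_smul _ _).symm
    _ ≤ (μ s)⁻¹ • μ.restrict s := by gcongr; exact ENNReal.one_le_inv.2 prob_le_one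

theorem map_cond_preimage {Ω E : Type*} [MeasurableSpace Ω] [MeasurableSpace E] {P : Measure Ω}
    {X : Ω → E} (hX : AEMeasurable X P) {s : Set E} (hs : MeasurableSet s) :
    (P[|X ⁻¹' s]).map X = (P.map X)[|s] := by
  simp only [ProbabilityTheory.cond, Measure.map_smul,
    Measure.restrict_map_of_aemeasurable hX hs, Measure.map_apply_of_aemeasurable hX hs]

/-- `π` is a coupling of `μ` and `ν`: its marginals are `μ` and `ν`. The masses are not required
to be `1`, so that couplings can be assembled from pieces. -/
structure IsCoupling {α β : Type*} [MeasurableSpace α] [MeasurableSpace β]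
    (π : Measure (α × β)) (μ : Measure α) (ν : Measure β) : Prop where
  fst_eq : π.fst = μ
  snd_eq : π.snd = ν

section Coupling

variable {α β : Type*} [MeasurableSpace α] [MeasurableSpace β]
  {μ : Measure α} {ν : Measure β} {π ρ : Measure (α × β)} {s : Set α} {t : Set β}

namespace IsCoupling

theorem measure_univ_eq (h : IsCoupling π μ ν) : π Set.univ = μ Set.univ := by
  rw [← h.fst_eq, Measure.fst_univ]

theorem isProbabilityMeasure [IsProbabilityMeasure μ] (h : IsCoupling π μ ν) :
    IsProbabilityMeasure π :=
  ⟨h.measure_univ_eq.trans measure_univ⟩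

theorem ae_mem_prod (h : IsCoupling π μ ν) (hs : ∀ᵐ x ∂μ, x ∈ s) (ht : ∀ᵐ y ∂ν, y ∈ t) :
    ∀ᵐ q ∂π, q ∈ s ×ˢ t := by
  rw [← h.fst_eq] at hs
  rw [← h.snd_eq] at ht
  exact (ae_of_ae_map measurable_fst.aemeasurable hs).and
    (ae_of_ae_map measurable_snd.aemeasurable ht)

theorem measureReal_compl_prod_le (h : IsCoupling π μ ν)
    (hs : MeasurableSet s) (ht : MeasurableSet t) :
    π.real (s ×ˢ t)ᶜ ≤ μ.real sᶜ + ν.real tᶜ := by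
  rw [Set.compl_prod_eq_union, Set.prod_univ, Set.univ_prod, ← h.fst_eq, ← h.snd_eq, Measure.fst,
    Measure.snd, map_measureReal_apply measurable_fst hs.compl,
    map_measureReal_apply measurable_snd ht.compl]
  exact measureReal_union_le _ _

end IsCoupling

theorem isCoupling_prod [IsProbabilityMeasure μ] [IsProbabilityMeasure ν] :
    IsCoupling (μ.prod ν) μ ν :=
  ⟨Measure.fst_prod, Measure.snd_prod⟩

theorem isCoupling_inv_smul_prod [IsFiniteMeasure μ] [IsFiniteMeasure ν]
    (h : μ Set.univ = ν Set.univ) : IsCoupling ((μ Set.univ)⁻¹ • μ.prod ν) μ ν := by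
  by_cases hμ : μ Set.univ = 0
  · obtain rfl := Measure.measure_univ_eq_zero.1 hμ
    obtain rfl := Measure.measure_univ_eq_zero.1 (h.symm.trans hμ)
    constructor <;> simp
  · have hcancel : (μ Set.univ)⁻¹ * μ Set.univ = 1 :=
      ENNReal.inv_mul_cancel hμ (measure_ne_top μ _)
    constructor
    · rw [Measure.fst, Measure.map_smul, Measure.map_fst_prod, ← h, smul_smul, hcancel, one_smul]
    · rw [Measure.snd, Measure.map_smul, Measure.map_snd_prod, smul_smul, hcancel, one_smul]

theorem exists_isCoupling_add [IsFiniteMeasure μ] [IsFiniteMeasure ν]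
    (h : μ Set.univ = ν Set.univ) (hfst : ρ.fst ≤ μ) (hsnd : ρ.snd ≤ ν) :
    ∃ γ : Measure (α × β), IsCoupling (ρ + γ) μ ν := by
  have : IsFiniteMeasure ρ.fst := isFiniteMeasure_of_le μ hfst
  have : IsFiniteMeasure ρ.snd := isFiniteMeasure_of_le ν hsnd
  have hmass : (μ - ρ.fst) Set.univ = (ν - ρ.snd) Set.univ := by
    rw [Measure.sub_apply .univ hfst, Measure.sub_apply .univ hsnd, Measure.fst_univ,
      Measure.snd_univ, h]
  obtain ⟨γ, hγ⟩ : ∃ γ, IsCoupling γ (μ - ρ.fst) (ν - ρ.snd) :=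
    ⟨_, isCoupling_inv_smul_prod hmass⟩
  refine ⟨γ, ?_, ?_⟩
  · rw [Measure.fst_add, hγ.fst_eq, add_comm, Measure.sub_add_cancel_of_le hfst]
  · rw [Measure.snd_add, hγ.snd_eq, add_comm, Measure.sub_add_cancel_of_le hsnd]

theorem fst_restrict_prod_le (hs : MeasurableSet s) :
    (π.restrict (s ×ˢ t)).fst ≤ π.fst.restrict s := by
  rw [Measure.fst, Measure.fst, Measure.restrict_map measurable_fst hs]
  exact Measure.map_mono (Measure.restrict_mono (fun _ hq => hq.1) le_rfl) measurable_fst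

theorem snd_restrict_prod_le (ht : MeasurableSet t) :
    (π.restrict (s ×ˢ t)).snd ≤ π.snd.restrict t := by
  rw [Measure.snd, Measure.snd, Measure.restrict_map measurable_snd ht]
  exact Measure.map_mono (Measure.restrict_mono (fun _ hq => hq.2) le_rfl) measurable_snd

end Coupling

section TransportCost

variable {E : Type*} [NormedAddCommGroup E] [MeasurableSpace E]
  {μ ν : Measure E} {π ρ : Measure (E × E)} {D : Set E}

theorem ae_norm_norm_sub_le_diam (hD : Bornology.IsBounded D) (hπ : ∀ᵐ q ∂π, q ∈ D ×ˢ D) :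
    ∀ᵐ q ∂π, ‖‖q.1 - q.2‖‖ ≤ Metric.diam D := by
  filter_upwards [hπ] with q hq
  rw [norm_norm, ← dist_eq_norm]
  exact Metric.dist_le_diam_of_mem hD hq.1 hq.2

theorem integral_norm_sub_le_diam [IsFiniteMeasure π] (hD : Bornology.IsBounded D)
    (hπ : ∀ᵐ q ∂π, q ∈ D ×ˢ D) :
    ∫ q, ‖q.1 - q.2‖ ∂π ≤ Metric.diam D * π.real Set.univ :=
  (le_abs_self _).trans (norm_integral_le_of_norm_le_const (ae_norm_norm_sub_le_diam hD hπ))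

theorem W1_le_integral [IsProbabilityMeasure μ] (hπ : IsCoupling π μ ν) :
    W1 μ ν ≤ ∫ q, ‖q.1 - q.2‖ ∂π := by
  refine csInf_le ⟨0, ?_⟩ ⟨π, hπ.isProbabilityMeasure, hπ.fst_eq, hπ.snd_eq, rfl⟩
  rintro _ ⟨π', -, -, -, rfl⟩
  exact integral_nonneg fun _ => norm_nonneg _

theorem le_W1 [IsProbabilityMeasure μ] [IsProbabilityMeasure ν] {c : ℝ}
    (h : ∀ π, IsCoupling π μ ν → c ≤ ∫ q, ‖q.1 - q.2‖ ∂π) : c ≤ W1 μ ν := by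
  have hprod : IsCoupling (μ.prod ν) μ ν := isCoupling_prod
  refine le_csInf ⟨_, μ.prod ν, inferInstance, hprod.fst_eq, hprod.snd_eq, rfl⟩ ?_
  rintro _ ⟨π, -, hfst, hsnd, rfl⟩
  exact h π ⟨hfst, hsnd⟩

variable [OpensMeasurableSpace E] [SecondCountableTopology E]

theorem integrable_norm_sub_of_ae_mem_prod [IsFiniteMeasure π] (hD : Bornology.IsBounded D)
    (hπ : ∀ᵐ q ∂π, q ∈ D ×ˢ D) : Integrable (fun q : E × E => ‖q.1 - q.2‖) π :=
  .of_bound (continuous_fst.sub continuous_snd).norm.measurable.aestronglyMeasurable _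
    (ae_norm_norm_sub_le_diam hD hπ)

theorem IsCoupling.integrable_norm_sub (hπ : IsCoupling π μ ν)
    (hμ : Integrable (fun x => ‖x‖) μ) (hν : Integrable (fun y => ‖y‖) ν) :
    Integrable (fun q : E × E => ‖q.1 - q.2‖) π := by
  rw [← hπ.fst_eq] at hμ
  rw [← hπ.snd_eq] at hν
  refine ((hμ.comp_measurable measurable_fst).add (hν.comp_measurable measurable_snd)).mono'
    (continuous_fst.sub continuous_snd).norm.measurable.aestronglyMeasurable
    (.of_forall fun q => ?_)
  rw [norm_norm]
  exact norm_sub_le q.1 q.2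

theorem W1_le_integral_add_of_fst_le_of_snd_le [IsProbabilityMeasure μ] [IsProbabilityMeasure ν]
    (hD : Bornology.IsBounded D) (hμ : ∀ᵐ x ∂μ, x ∈ D) (hν : ∀ᵐ y ∂ν, y ∈ D)
    (hfst : ρ.fst ≤ μ) (hsnd : ρ.snd ≤ ν) :
    W1 μ ν ≤ ∫ q, ‖q.1 - q.2‖ ∂ρ + (1 - ρ.real Set.univ) * Metric.diam D := by
  obtain ⟨γ, hγ⟩ := exists_isCoupling_add (measure_univ.trans measure_univ.symm) hfst hsnd
  have : IsProbabilityMeasure (ρ + γ) := hγ.isProbabilityMeasure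
  have : IsFiniteMeasure ρ := isFiniteMeasure_of_le (ρ + γ) (Measure.le_add_right le_rfl)
  have : IsFiniteMeasure γ := isFiniteMeasure_of_le (ρ + γ) (Measure.le_add_left le_rfl)
  have hmass : γ.real Set.univ = 1 - ρ.real Set.univ := by
    rw [eq_sub_iff_add_eq', ← measureReal_add_apply, probReal_univ]
  obtain ⟨hρD, hγD⟩ := ae_add_measure_iff.1 (hγ.ae_mem_prod hμ hν)
  calc W1 μ ν ≤ ∫ q, ‖q.1 - q.2‖ ∂(ρ + γ) := W1_le_integral hγ
    _ = ∫ q, ‖q.1 - q.2‖ ∂ρ + ∫ q, ‖q.1 - q.2‖ ∂γ :=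
      integral_add_measure (integrable_norm_sub_of_ae_mem_prod hD hρD)
        (integrable_norm_sub_of_ae_mem_prod hD hγD)
    _ ≤ ∫ q, ‖q.1 - q.2‖ ∂ρ + (1 - ρ.real Set.univ) * Metric.diam D := by
      rw [← hmass, mul_comm]
      gcongr
      exact integral_norm_sub_le_diam hD hγD

theorem W1_cond_le_add_measureReal_compl_mul_diam
    [IsProbabilityMeasure μ] [IsProbabilityMeasure ν]
    (hμ : Integrable (fun x => ‖x‖) μ) (hν : Integrable (fun y => ‖y‖) ν)
    (hDm : MeasurableSet D) (hD : Bornology.IsBounded D) (hμD : μ D ≠ 0) (hνD : ν D ≠ 0) :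
    W1 μ[|D] ν[|D] ≤ W1 μ ν + (μ.real Dᶜ + ν.real Dᶜ) * Metric.diam D := by
  have := cond_isProbabilityMeasure hμD
  have := cond_isProbabilityMeasure hνD
  rw [← sub_le_iff_le_add]
  refine le_W1 fun π hπ => sub_le_iff_le_add.2 ?_
  have := hπ.isProbabilityMeasure
  have hfst : (π.restrict (D ×ˢ D)).fst ≤ μ[|D] :=
    (fst_restrict_prod_le hDm).trans (hπ.fst_eq ▸ restrict_le_cond μ D)
  have hsnd : (π.restrict (D ×ˢ D)).snd ≤ ν[|D] :=
    (snd_restrict_prod_le hDm).trans (hπ.snd_eq ▸ restrict_le_cond ν D)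
  have hcost : ∫ q in D ×ˢ D, ‖q.1 - q.2‖ ∂π ≤ ∫ q, ‖q.1 - q.2‖ ∂π :=
    setIntegral_le_integral (hπ.integrable_norm_sub hμ hν) (.of_forall fun _ => norm_nonneg _)
  have hmass : 1 - (π.restrict (D ×ˢ D)).real Set.univ ≤ μ.real Dᶜ + ν.real Dᶜ := by
    rw [measureReal_restrict_apply_univ, ← probReal_compl_eq_one_sub (hDm.prod hDm)]
    exact hπ.measureReal_compl_prod_le hDm hDm
  calc W1 μ[|D] ν[|D]
      ≤ ∫ q in D ×ˢ D, ‖q.1 - q.2‖ ∂π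
          + (1 - (π.restrict (D ×ˢ D)).real Set.univ) * Metric.diam D :=
        W1_le_integral_add_of_fst_le_of_snd_le hD (ae_cond_mem hDm) (ae_cond_mem hDm) hfst hsnd
    _ ≤ ∫ q, ‖q.1 - q.2‖ ∂π + (μ.real Dᶜ + ν.real Dᶜ) * Metric.diam D := by
        gcongr

end TransportCost

theorem W1_cond_le_general {E : Type*} [NormedAddCommGroup E] [MeasurableSpace E]
    [OpensMeasurableSpace E] [SecondCountableTopology E]
    {Ω Ω' : Type*} [MeasurableSpace Ω] [MeasurableSpace Ω'] {P : Measure Ω} {Q : Measure Ω'}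
    [IsProbabilityMeasure P] [IsProbabilityMeasure Q] {X : Ω → E} {Y : Ω' → E}
    (hX : AEMeasurable X P) (hY : AEMeasurable Y Q)
    (hXint : Integrable (fun ω => ‖X ω‖) P) (hYint : Integrable (fun ω => ‖Y ω‖) Q)
    {D : Set E} (hDm : MeasurableSet D) (hD : Bornology.IsBounded D)
    {ε δ : ℝ} (hε : 0 ≤ ε) (hδ : 0 ≤ δ)
    (hXD : P (X ⁻¹' D)ᶜ ≤ ENNReal.ofReal ε) (hYD : Q (Y ⁻¹' D)ᶜ ≤ ENNReal.ofReal δ)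
    (hXpos : 0 < P (X ⁻¹' D)) (hYpos : 0 < Q (Y ⁻¹' D)) :
    W1 ((P[|X ⁻¹' D]).map X) ((Q[|Y ⁻¹' D]).map Y)
      ≤ W1 (P.map X) (Q.map Y) + (ε + δ) * Metric.diam D := by
  have := Measure.isProbabilityMeasure_map hX
  have := Measure.isProbabilityMeasure_map hY
  rw [← Set.preimage_compl, ← Measure.map_apply_of_aemeasurable hX hDm.compl] at hXD
  rw [← Set.preimage_compl, ← Measure.map_apply_of_aemeasurable hY hDm.compl] at hYD
  rw [← Measure.map_apply_of_aemeasurable hX hDm] at hXpos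
  rw [← Measure.map_apply_of_aemeasurable hY hDm] at hYpos
  rw [map_cond_preimage hX hDm, map_cond_preimage hY hDm]
  calc W1 (P.map X)[|D] (Q.map Y)[|D]
      ≤ W1 (P.map X) (Q.map Y)
          + ((P.map X).real Dᶜ + (Q.map Y).real Dᶜ) * Metric.diam D :=
        W1_cond_le_add_measureReal_compl_mul_diam
          ((integrable_map_measure measurable_norm.aestronglyMeasurable hX).2 hXint)
          ((integrable_map_measure measurable_norm.aestronglyMeasurable hY).2 hYint)
          hDm hD hXpos.ne' hYpos.ne'
    _ ≤ W1 (P.map X) (Q.map Y) + (ε + δ) * Metric.diam D := by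
        gcongr
        · exact ENNReal.toReal_le_of_le_ofReal hε hXD
        · exact ENNReal.toReal_le_of_le_ofReal hδ hYD

/-- Stability of the 1-Wasserstein distance under conditioning on a high-probability
compact set: if `P(X ∉ D) ≤ ε` and `P(Y ∉ D) ≤ δ`, then the Wasserstein distance between
the conditional laws of `X` and `Y` given membership in `D` exceeds `W₁(X,Y)` by at most
`(ε + δ) · diam D` (where `diam D = max_{x,y ∈ D} ‖x − y‖`). -/
theorem W1_cond_le
    (n : ℕ) {Ω Ω' : Type*} [MeasurableSpace Ω] [MeasurableSpace Ω']
    (P : Measure Ω) (Q : Measure Ω')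
    [IsProbabilityMeasure P] [IsProbabilityMeasure Q]
    (X : Ω → EuclideanSpace ℝ (Fin n)) (Y : Ω' → EuclideanSpace ℝ (Fin n))
    (hXmeas : Measurable X) (hYmeas : Measurable Y)
    (hXint : Integrable (fun ω => ‖X ω‖) P) (hYint : Integrable (fun ω => ‖Y ω‖) Q)
    (D : Set (EuclideanSpace ℝ (Fin n))) (hD : IsCompact D)
    (ε δ : ℝ) (hε : 0 ≤ ε) (hδ : 0 ≤ δ)
    (hXD : P (X ⁻¹' D)ᶜ ≤ ENNReal.ofReal ε) (hYD : Q (Y ⁻¹' D)ᶜ ≤ ENNReal.ofReal δ)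
    (hXpos : 0 < P (X ⁻¹' D)) (hYpos : 0 < Q (Y ⁻¹' D)) :
    W1 ((ProbabilityTheory.cond P (X ⁻¹' D)).map X) ((ProbabilityTheory.cond Q (Y ⁻¹' D)).map Y)
      ≤ W1 (P.map X) (Q.map Y) + (ε + δ) * Metric.diam D :=
  W1_cond_le_general hXmeas.aemeasurable hYmeas.aemeasurable hXint hYint hD.measurableSet
    hD.isBounded hε hδ hXD hYD hXpos hYpos

end
end

section
/- Let p, m ∈ ℕ with m < p, and let c ≥ 0 be a real number with 1 + 2c ≤ p − m. Let t₀, t₁, …, t_m ∈ [0,1] satisfy t₀ = 1 and t_{j+1} ≤ t_j·(1 − (1 + c·t_j)/(p − j)) for all 0 ≤ j < m. Then t_j ≤ (1 − j/p)/(1 + c·j/p) for all 0 ≤ j ≤ m. -/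
/-!
The function `g x = (1 - x) / (1 + c * x)` solves `g' = -g * (1 + c * g) / (1 - x)` with `g 0 = 1`,
and the recursion is the explicit Euler scheme of this equation with nodes `j / p` and step `1 / p`.
Since `g` is convex, an Euler step started on its graph follows the tangent line and ends below the
graph. For short steps the Euler map is monotone on values at most `1`, so a subsolution of the
scheme that starts below `g` stays below `g`.
-/

section Field

variable {𝕜 : Type*} [Field 𝕜]

/-- The comparison function `g x = (1 - x) / (1 + c * x)` that dominates the bias recursion.
At a pole `1 + c * x = 0` it takes the value `0`. -/
def biasProfile (c x : 𝕜) : 𝕜 := (1 - x) / (1 + c * x)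

/-- One explicit Euler step of length `h`, from the value `y` at the point `x`, for the
differential equation `y' = -y * (1 + c * y) / (1 - x)` solved by `biasProfile c`.
At the singular point `x = 1` the step is the identity. -/
def biasEulerStep (c x h y : 𝕜) : 𝕜 := y * (1 - h * (1 + c * y) / (1 - x))

theorem biasProfile_zero (c : 𝕜) : biasProfile c 0 = 1 := by
  simp [biasProfile]

theorem one_add_mul_biasProfile {c x : 𝕜} (hcx : 1 + c * x ≠ 0) :
    1 + c * biasProfile c x = (1 + c) / (1 + c * x) := by
  unfold biasProfile
  field_simp
  ring

-- The right-hand side is the tangent line of `g` at `x`, as `g' x = -(1 + c) / (1 + c * x) ^ 2`.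
theorem biasEulerStep_biasProfile {c x : 𝕜} (hx : x ≠ 1) (hcx : 1 + c * x ≠ 0) (h : 𝕜) :
    biasEulerStep c x h (biasProfile c x) =
      biasProfile c x - h * ((1 + c) / (1 + c * x) ^ 2) := by
  have hx' : 1 - x ≠ 0 := sub_ne_zero.2 hx.symm
  rw [biasEulerStep, one_add_mul_biasProfile hcx, biasProfile]
  -- `field_simp` recognizes the nonzero denominator only with its factors in this order.
  rw [mul_comm c x] at hcx ⊢
  field_simp

theorem biasProfile_add_sub_tangent {c x h : 𝕜} (hcx : 1 + c * x ≠ 0)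
    (hcxh : 1 + c * (x + h) ≠ 0) :
    biasProfile c (x + h) - (biasProfile c x - h * ((1 + c) / (1 + c * x) ^ 2)) =
      c * (1 + c) * h ^ 2 / ((1 + c * x) ^ 2 * (1 + c * (x + h))) := by
  unfold biasProfile
  rw [mul_comm c x] at hcx ⊢
  rw [mul_comm c (x + h)] at hcxh ⊢
  field_simp
  ring

theorem biasEulerStep_sub_biasEulerStep (c x h y z : 𝕜) :
    biasEulerStep c x h z - biasEulerStep c x h y =
      (z - y) * (1 - h * (1 + c * (y + z)) / (1 - x)) := by
  unfold biasEulerStep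
  ring

theorem biasEulerStep_div_inv {p : 𝕜} (hp : p ≠ 0) (c k y : 𝕜) :
    biasEulerStep c (k / p) p⁻¹ y = y * (1 - (1 + c * y) / (p - k)) := by
  rw [biasEulerStep, one_sub_div hp, inv_mul_eq_div, div_div_div_cancel_right₀ hp]

end Field

section LinearOrderedField

variable {𝕜 : Type*} [Field 𝕜] [LinearOrder 𝕜] [IsStrictOrderedRing 𝕜] {c x h : 𝕜}

theorem biasProfile_le_one (hc : 0 ≤ c) (hx : 0 ≤ x) : biasProfile c x ≤ 1 := by
  have hcx : 0 ≤ c * x := mul_nonneg hc hx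
  exact div_le_one_of_le₀ (by linarith) (by linarith)

theorem biasProfile_tangent_le (hc : 0 ≤ c) (hcx : 1 + c * x ≠ 0) (hcxh : 0 < 1 + c * (x + h)) :
    biasProfile c x - h * ((1 + c) / (1 + c * x) ^ 2) ≤ biasProfile c (x + h) := by
  rw [← sub_nonneg, biasProfile_add_sub_tangent hcx hcxh.ne']
  positivity

theorem monotoneOn_biasEulerStep (hc : 0 ≤ c) (hh : 0 ≤ h)
    (hstep : h * (1 + 2 * c) ≤ 1 - x) : MonotoneOn (biasEulerStep c x h) (Set.Iic 1) := by
  intro y (hy : y ≤ 1) z (hz : z ≤ 1) hyz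
  have hx : 0 ≤ 1 - x := le_trans (by positivity) hstep
  have hslope : h * (1 + c * (y + z)) ≤ 1 - x :=
    calc h * (1 + c * (y + z)) ≤ h * (1 + c * 2) := by gcongr; linarith
      _ = h * (1 + 2 * c) := by ring
      _ ≤ 1 - x := hstep
  rw [← sub_nonneg, biasEulerStep_sub_biasEulerStep]
  exact mul_nonneg (sub_nonneg.2 hyz) (sub_nonneg.2 (div_le_one_of_le₀ hslope hx))

theorem biasEulerStep_le_biasProfile_add {y : 𝕜} (hc : 0 ≤ c) (hx₀ : 0 ≤ x) (hx₁ : x ≠ 1)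
    (hh : 0 ≤ h) (hstep : h * (1 + 2 * c) ≤ 1 - x) (hy : y ≤ biasProfile c x) :
    biasEulerStep c x h y ≤ biasProfile c (x + h) := by
  have hg : biasProfile c x ≤ 1 := biasProfile_le_one hc hx₀
  have hcx : 1 + c * x ≠ 0 := by positivity
  calc biasEulerStep c x h y
      ≤ biasEulerStep c x h (biasProfile c x) :=
        monotoneOn_biasEulerStep hc hh hstep (hy.trans hg) hg hy
    _ = biasProfile c x - h * ((1 + c) / (1 + c * x) ^ 2) := biasEulerStep_biasProfile hx₁ hcx h
    _ ≤ biasProfile c (x + h) := biasProfile_tangent_le hc hcx (by positivity)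

theorem bias_recursion_upper_bound_general {p : 𝕜} {m : ℕ} (hp : 0 < p) (hc : 0 ≤ c)
    (hcp : 2 * c ≤ p - m) {t : ℕ → 𝕜} (ht0 : t 0 ≤ 1)
    (hrec : ∀ j < m, t (j + 1) ≤ t j * (1 - (1 + c * t j) / (p - j))) :
    ∀ j ≤ m, t j ≤ (1 - j / p) / (1 + c * (j / p)) := by
  change ∀ j ≤ m, t j ≤ biasProfile c (j / p)
  intro j hj
  induction j with
  | zero => simpa [biasProfile_zero] using ht0
  | succ j ih =>
    have hjm : (j : 𝕜) + 1 ≤ m := by exact_mod_cast hj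
    have hjp : (j : 𝕜) / p ≠ 1 := ((div_lt_one hp).2 (by linarith)).ne
    have hstep : p⁻¹ * (1 + 2 * c) ≤ 1 - j / p := by
      rw [one_sub_div hp.ne', inv_mul_eq_div]
      gcongr
      linarith
    calc t (j + 1) ≤ t j * (1 - (1 + c * t j) / (p - j)) := hrec j hj
      _ = biasEulerStep c (j / p) p⁻¹ (t j) := (biasEulerStep_div_inv hp.ne' c j (t j)).symm
      _ ≤ biasProfile c (j / p + p⁻¹) :=
        biasEulerStep_le_biasProfile_add hc (by positivity) hjp (by positivity) hstep
          (ih (Nat.le_of_succ_le hj))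
      _ = biasProfile c ((j + 1 : ℕ) / p) := by rw [Nat.cast_succ, add_div, one_div]

end LinearOrderedField

/-- The discrete recursion governing the parameter bias of the batch minimum-norm
estimator: if `t 0 = 1`, each `t j` lies in `[0,1]`, and
`t (j+1) ≤ t j * (1 - (1 + c * t j) / (p - j))` for `j < m`, with `c ≥ 0` and
`1 + 2c ≤ p - m`, then `t j ≤ (1 - j/p) / (1 + c * (j/p))` for all `j ≤ m`. -/
theorem bias_recursion_upper_bound (p m : ℕ) (hm : m < p) (c : ℝ) (hc : 0 ≤ c)
    (hcp : 1 + 2 * c ≤ (p : ℝ) - (m : ℝ))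
    (t : ℕ → ℝ) (ht01 : ∀ j ≤ m, t j ∈ Set.Icc (0:ℝ) 1) (ht0 : t 0 = 1)
    (hrec : ∀ j < m, t (j + 1) ≤ t j * (1 - (1 + c * t j) / ((p : ℝ) - (j : ℝ)))) :
    ∀ j ≤ m, t j ≤ (1 - (j : ℝ) / p) / (1 + c * ((j : ℝ) / p)) :=
  bias_recursion_upper_bound_general (Nat.cast_pos.2 (Nat.zero_lt_of_lt hm)) hc (by linarith)
    ht0.le hrec
end

section
/- For every γ > 1 and every ξ ∈ (0,1): 1 − (2ξ − ξ²)/γ + ξ(1−ξ)/(γ−1) < 1 − 1/γ + (1−ξ)/(ξ(γ−1)). -/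
/-!
Both sides are values of one quadratic in the factor `a` of the estimator `a·β̂_MN`: bias
from the unobserved directions, bias `(1 - a)² / γ` from shrinking the observed ones, and variance
proportional to `a²`. Shrinking from `1` to `a` trades `(1 - a) (1 + a)` units of variance for
`(1 - a)²` units of bias. Since `1 - ξ` is `ξ` times the noise-to-signal ratio `(1 - ξ) / ξ`,
at `a = ξ` the gain is a positive multiple of `(1 + ξ) / (γ - 1) - ξ / γ`.
-/

variable {K : Type*} [Field K]

/-- The limiting quadratic risk, divided by the signal strength `r²`, of the estimator `a·β̂_MN`
at overparametrization ratio `γ` and normalized signal-to-noise ratio `ξ`. The estimator `β̂_MN`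
sees a fraction `1 / γ` of the signal, and `(1 - ξ) / ξ` is the noise-to-signal ratio `σ² / r²`. -/
def limitingRisk (γ ξ a : K) : K :=
  (1 - 1 / γ) + (1 - a) ^ 2 / γ + a ^ 2 * ((1 - ξ) / ξ) / (γ - 1)

theorem limitingRisk_one (γ ξ : K) :
    limitingRisk γ ξ 1 = 1 - 1 / γ + (1 - ξ) / (ξ * (γ - 1)) := by
  simp [limitingRisk, div_div]

theorem limitingRisk_self (γ : K) {ξ : K} (hξ : ξ ≠ 0) :
    limitingRisk γ ξ ξ = 1 - (2 * ξ - ξ ^ 2) / γ + ξ * (1 - ξ) / (γ - 1) := by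
  have variance : ξ ^ 2 * ((1 - ξ) / ξ) = ξ * (1 - ξ) := by field_simp
  rw [limitingRisk, variance]
  ring

theorem limitingRisk_one_sub (γ ξ a : K) :
    limitingRisk γ ξ 1 - limitingRisk γ ξ a =
      (1 - a) * ((1 + a) * ((1 - ξ) / ξ) / (γ - 1) - (1 - a) / γ) := by
  unfold limitingRisk
  ring

theorem limitingRisk_one_sub_self (γ : K) {ξ : K} (hξ : ξ ≠ 0) :
    limitingRisk γ ξ 1 - limitingRisk γ ξ ξ =
      (1 - ξ) ^ 2 / ξ * ((1 + ξ) / (γ - 1) - ξ / γ) := by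
  have one_sub_eq : 1 - ξ = ξ * ((1 - ξ) / ξ) := (mul_div_cancel₀ _ hξ).symm
  calc limitingRisk γ ξ 1 - limitingRisk γ ξ ξ
      = (1 - ξ) * ((1 + ξ) * ((1 - ξ) / ξ) / (γ - 1) - (1 - ξ) / γ) :=
        limitingRisk_one_sub γ ξ ξ
    _ = (1 - ξ) * ((1 + ξ) * ((1 - ξ) / ξ) / (γ - 1) - ξ * ((1 - ξ) / ξ) / γ) := by
        rw [← one_sub_eq]
    _ = (1 - ξ) ^ 2 / ξ * ((1 + ξ) / (γ - 1) - ξ / γ) := by ring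

theorem shrunk_min_norm_beats_min_norm_general [LinearOrder K] [IsStrictOrderedRing K] {γ ξ : K}
    (hγ : 1 < γ) (hξ_pos : 0 < ξ) (hξ_ne : ξ ≠ 1) :
    1 - (2 * ξ - ξ ^ 2) / γ + ξ * (1 - ξ) / (γ - 1) <
      1 - 1 / γ + (1 - ξ) / (ξ * (γ - 1)) := by
  have bias_lt_variance : ξ / γ < (1 + ξ) / (γ - 1) :=
    div_lt_div₀ (lt_one_add ξ) (sub_le_self γ zero_le_one) (by positivity) (sub_pos.mpr hγ)
  have scale_pos : 0 < (1 - ξ) ^ 2 / ξ :=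
    div_pos (sq_pos_of_ne_zero (sub_ne_zero.mpr hξ_ne.symm)) hξ_pos
  rw [← limitingRisk_self γ hξ_pos.ne', ← limitingRisk_one, ← sub_pos,
    limitingRisk_one_sub_self γ hξ_pos.ne']
  exact mul_pos scale_pos (sub_pos.mpr bias_lt_variance)

/-- The limiting risk of the shrinkage estimator `ξ·β̂_MN` is strictly smaller than the
limiting risk of the minimum-norm estimator, for every overparametrization ratio `γ > 1`
and every normalized SNR `ξ ∈ (0,1)`. -/
theorem shrunk_min_norm_beats_min_norm (γ ξ : ℝ) (hγ : 1 < γ) (hξ : ξ ∈ Set.Ioo (0:ℝ) 1) :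
    1 - (2 * ξ - ξ ^ 2) / γ + ξ * (1 - ξ) / (γ - 1) <
      1 - 1 / γ + (1 - ξ) / (ξ * (γ - 1)) :=
  shrunk_min_norm_beats_min_norm_general hγ hξ.1 hξ.2.ne
end
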